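/- Let l, n be positive integers, let K be a field, and let θ : ℤ[q^{±1}, Q_0^{±1}, …, Q_{l−1}^{±1}] → K be a ring homomorphism. Define P(q) := ∏_{i=1}^{n} (1 + q + ⋯ + q^{i−1}) · ∏_{0≤s<t≤l−1} ∏_{−n<k<n} (q^k Q_s − Q_t), and for each l-partition λ of n define s_λ(q) := (−1)^{n(l−1)} q^{−n(λ̄)} · ∏_{s=0}^{l−1} ∏_{(i,j)∈[λ^s]} ( [h_{i,j}^{λ^s,λ^s}]_q · ∏_{0≤t≤l−1, t≠s} (q^{h_{i,j}^{λ^s,λ^t}} Q_s Q_t^{−1} − 1) ), both elements of ℤ[q^{±1}, Q_0^{±1}, …, Q_{l−1}^{±1}]. Then θ(P(q)) ≠ 0 if and only if θ(s_λ(q)) ≠ 0 for every l-partition λ of n. (This is Ariki's semisimplicity criterion: the specialised Ariki–Koike algebra is split semisimple exactly when all specialised Schur elements are nonzero.) -/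

import Mathlib

/-- A partition, encoded as a weakly decreasing, eventually-zero sequence of
natural numbers; `parts i` is the `(i+1)`-st part `λ_{i+1}` (0-indexed rows). -/
structure Ptn where
  parts : ℕ → ℕ
  antitone' : Antitone parts
  eventually_zero : ∃ N, ∀ i, N ≤ i → parts i = 0

namespace Ptn

/-- `conj p k` is the conjugate-partition part `λ'_{k+1} = #{i ≥ 1 : λ_i ≥ k+1}`. -/
noncomputable def conj (p : Ptn) (k : ℕ) : ℕ := Nat.card {i : ℕ // k < p.parts i}

/-- `|λ| = Σ_{i ≥ 1} λ_i`. -/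
noncomputable def size (p : Ptn) : ℕ := ∑ᶠ i, p.parts i

/-- `n(λ) = Σ_{i ≥ 1} (i-1) λ_i`. -/
noncomputable def nn (p : Ptn) : ℕ := ∑ᶠ i, i * p.parts i

/-- The empty partition. -/
def empty : Ptn := ⟨fun _ => 0, fun _ _ _ => le_rfl, ⟨0, fun _ _ => rfl⟩⟩

end Ptn

/-- The generalised hook length `h_{i,j}^{λ,μ} = λ_i - i + μ'_j - j + 1`, for the node
in (0-indexed) row `i` and column `j`, i.e. the 1-indexed node `(i+1, j+1)`. -/
noncomputable def ghook (lam mu : Ptn) (i j : ℕ) : ℤ :=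
  (lam.parts i : ℤ) - (i + 1) + (mu.conj j : ℤ) - (j + 1) + 1

/-!
Both conditions say that no `[m]_q` with `1 ≤ m ≤ n` vanishes and that no `Q_t` with `t ≠ s` is of
the form `q ^ k * Q_s` with `|k| < n`. For the product `P` this is a reading of its factors, the
exchange of `s` and `t` accounting for `k ↦ -k`. For the Schur elements, one direction is the bound
`|h^{λ,μ}_{i,j}| < |λ| + |μ|` on generalised hook lengths, which holds because the row and the
column through a node of `λ` share only that node. Conversely, the multipartitions consisting of one
row of length `n` already suffice: the hook lengths of a row with respect to itself exhaust
`1, …, n`, and those with respect to the empty partition exhaust `0, …, n - 1`.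
-/

namespace Ptn

theorem finite_support (p : Ptn) : p.parts.support.Finite := by
  obtain ⟨N, hN⟩ := p.eventually_zero
  refine (Set.finite_Iio N).subset fun i hi => ?_
  contrapose! hi
  simpa using hN i (by simpa using hi)

theorem lt_conj_iff (p : Ptn) {i j : ℕ} : i < p.conj j ↔ j < p.parts i := by
  have hex : ∃ r, p.parts r ≤ j := p.eventually_zero.imp fun N hN => by simp [hN N le_rfl]
  have hrow (r : ℕ) : j < p.parts r ↔ r < Nat.find hex := by
    simp only [Nat.lt_find_iff, not_le]
    exact ⟨fun h m hm => h.trans_le (p.antitone' hm), fun h => h r le_rfl⟩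
  have hconj : p.conj j = Nat.find hex :=
    (Nat.subtype_card (Finset.range _) fun r => Finset.mem_range.trans (hrow r).symm).trans
      (Finset.card_range _)
  rw [hconj, hrow]

theorem sum_parts_le_size (p : Ptn) (s : Finset ℕ) : ∑ i ∈ s, p.parts i ≤ p.size := by
  rw [size, finsum_eq_sum_of_support_subset (s := s ∪ p.finite_support.toFinset) _ (by simp)]
  exact Finset.sum_le_sum_of_subset Finset.subset_union_left

theorem conj_le_size (p : Ptn) (j : ℕ) : p.conj j ≤ p.size :=
  calc p.conj j = ∑ _r ∈ Finset.range (p.conj j), 1 := by simp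
    _ ≤ ∑ r ∈ Finset.range (p.conj j), p.parts r :=
      Finset.sum_le_sum fun r hr => Nat.one_le_of_lt (p.lt_conj_iff.mp (Finset.mem_range.mp hr))
    _ ≤ p.size := p.sum_parts_le_size _

theorem parts_add_conj_le_size_add_one (p : Ptn) {i j : ℕ} (hj : j < p.parts i) :
    p.parts i + p.conj j ≤ p.size + 1 := by
  have hi : i ∈ Finset.range (p.conj j) := Finset.mem_range.mpr (p.lt_conj_iff.mpr hj)
  have hcol : p.conj j - 1 ≤ ∑ r ∈ (Finset.range (p.conj j)).erase i, p.parts r :=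
    calc p.conj j - 1 = ∑ _r ∈ (Finset.range (p.conj j)).erase i, 1 := by simp [hi]
      _ ≤ _ := Finset.sum_le_sum fun r hr => Nat.one_le_of_lt <|
        p.lt_conj_iff.mp (Finset.mem_range.mp (Finset.mem_of_mem_erase hr))
  have hsize := p.sum_parts_le_size (Finset.range (p.conj j))
  rw [← Finset.add_sum_erase _ _ hi] at hsize
  omega

theorem finprod_prod_range_ne_zero_iff {M : Type*} [CommMonoidWithZero M] [NoZeroDivisors M]
    [Nontrivial M] (p : Ptn) (f : ℕ → ℕ → M) :
    ∏ᶠ i, ∏ j ∈ Finset.range (p.parts i), f i j ≠ 0 ↔ ∀ i j, j < p.parts i → f i j ≠ 0 := by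
  have hsupp : (Function.mulSupport fun i => ∏ j ∈ Finset.range (p.parts i), f i j) ⊆
      p.finite_support.toFinset := by
    intro i hi
    contrapose! hi
    simp_all
  simp only [finprod_eq_prod_of_mulSupport_subset _ hsupp, Finset.prod_ne_zero_iff,
    Set.Finite.mem_toFinset, Function.mem_support, Finset.mem_range]
  exact ⟨fun h i j hj => h i (by omega) j hj, fun h i _ => h i⟩

/-- The one-row partition `(n)`. -/
def row (n : ℕ) : Ptn where
  parts i := if i = 0 then n else 0
  antitone' a b hab := by dsimp only; split_ifs <;> omega
  eventually_zero := ⟨1, fun i hi => if_neg (by omega)⟩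

@[simp]
theorem row_parts_zero (n : ℕ) : (row n).parts 0 = n := rfl

@[simp]
theorem size_row (n : ℕ) : (row n).size = n :=
  finsum_eq_single _ 0 fun _ hi => if_neg hi

theorem conj_row {n j : ℕ} (hj : j < n) : (row n).conj j = 1 :=
  eq_of_forall_lt_iff fun i => by
    rw [lt_conj_iff]
    simp only [row]
    split_ifs <;> omega

@[simp]
theorem size_empty : empty.size = 0 := finsum_zero

@[simp]
theorem conj_empty (j : ℕ) : empty.conj j = 0 := by
  simp [empty, conj]

end Ptn

theorem ghook_self_pos (lam : Ptn) {i j : ℕ} (hj : j < lam.parts i) : 0 < ghook lam lam i j := by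
  have hi := lam.lt_conj_iff.mpr hj
  unfold ghook
  omega

theorem ghook_self_le_size (lam : Ptn) {i j : ℕ} (hj : j < lam.parts i) :
    ghook lam lam i j ≤ lam.size := by
  have hhook := lam.parts_add_conj_le_size_add_one hj
  unfold ghook
  omega

theorem abs_ghook_lt_size_add_size (lam mu : Ptn) {i j : ℕ} (hj : j < lam.parts i) :
    |ghook lam mu i j| < lam.size + mu.size := by
  have hi := lam.lt_conj_iff.mpr hj
  have hhook := lam.parts_add_conj_le_size_add_one hj
  have hmu := mu.conj_le_size j
  rw [abs_lt]
  unfold ghook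
  omega

theorem ghook_row_row {n j : ℕ} (hj : j < n) : ghook (.row n) (.row n) 0 j = n - j := by
  simp only [ghook, Ptn.conj_row hj, Ptn.row_parts_zero]
  omega

theorem ghook_row_empty (n j : ℕ) : ghook (.row n) .empty 0 j = n - 1 - j := by
  simp only [ghook, Ptn.conj_empty, Ptn.row_parts_zero]
  omega

section RowAt

variable {ι : Type*} [DecidableEq ι]

/-- The multipartition whose only nonempty component is a single row of length `n`, at `s`. These
are the multipartitions whose Schur elements detect every factor of `P`. -/
def rowAt (n : ℕ) (s : ι) : ι → Ptn :=
  Function.update (fun _ => .empty) s (.row n)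

@[simp]
theorem rowAt_self (n : ℕ) (s : ι) : rowAt n s s = .row n := Function.update_self ..

theorem rowAt_of_ne (n : ℕ) {s t : ι} (h : t ≠ s) : rowAt n s t = .empty :=
  Function.update_of_ne h ..

theorem sum_rowAt [Fintype ι] {M : Type*} [AddCommMonoid M] {f : Ptn → M} (hf : f .empty = 0)
    (n : ℕ) (s : ι) : ∑ t, f (rowAt n s t) = f (.row n) := by
  rw [Fintype.sum_eq_single s fun t ht => by rw [rowAt_of_ne n ht, hf], rowAt_self]

end RowAt

section Criterion

variable {ι K : Type*} [Field K] {n : ℕ} {q : K} {Q : ι → K}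

/-- The parameters are generic up to level `n`: the quantum integers `[1]_q, …, [n]_q` are nonzero
and no two distinct parameters `Q s`, `Q t` differ by a power of `q` with exponent of absolute value
below `n`. Both sides of Ariki's criterion are compared with this condition. -/
structure ArikiGeneric (n : ℕ) (q : K) (Q : ι → K) : Prop where
  geom_sum_ne_zero : ∀ m, 0 < m → m ≤ n → ∑ a ∈ Finset.range m, q ^ a ≠ 0
  zpow_mul_ne : ∀ s t, t ≠ s → ∀ k : ℤ, |k| < n → q ^ k * Q s ≠ Q t

theorem zpow_neg_mul_eq_iff (hq : q ≠ 0) (k : ℤ) (a b : K) : q ^ (-k) * a = b ↔ q ^ k * b = a := by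
  rw [zpow_neg, inv_mul_eq_iff_eq_mul₀ (zpow_ne_zero k hq), eq_comm]

theorem poincare_ne_zero_iff_arikiGeneric [Fintype ι] [LinearOrder ι] [LocallyFiniteOrderTop ι]
    (hq : q ≠ 0) :
    (∏ i ∈ Finset.range n, ∑ j ∈ Finset.range (i + 1), q ^ j) *
        ∏ s : ι, ∏ t ∈ Finset.Ioi s, ∏ k ∈ Finset.Ioo (-(n : ℤ)) (n : ℤ),
          (q ^ k * Q s - Q t) ≠ 0 ↔ ArikiGeneric n q Q := by
  simp only [mul_ne_zero_iff, Finset.prod_ne_zero_iff, Finset.mem_range, Finset.mem_univ,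
    Finset.mem_Ioi, Finset.mem_Ioo, true_imp_iff, sub_ne_zero, ← abs_lt]
  refine ⟨fun ⟨hsum, hpair⟩ => ⟨fun m hm hmn => ?_, fun s t hts k hk => ?_⟩,
    fun h => ⟨fun i hi => h.geom_sum_ne_zero _ i.succ_pos hi,
      fun s t hst k hk => h.zpow_mul_ne s t hst.ne' k hk⟩⟩
  · rw [← Nat.sub_add_cancel hm]
    exact hsum (m - 1) (by omega)
  · rcases lt_or_gt_of_ne hts with hlt | hlt
    · rw [ne_eq, ← zpow_neg_mul_eq_iff hq]
      exact hpair t s hlt (-k) (by rwa [abs_neg])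
    · exact hpair s t hlt k hk

variable [Fintype ι] [DecidableEq ι]

/-- The specialised Schur element of the multipartition `Λ` without its sign and its power of `q`,
which do not affect whether it vanishes. -/
noncomputable def schurProd (q : K) (Q : ι → K) (Λ : ι → Ptn) : K :=
  ∏ s, ∏ᶠ i, ∏ j ∈ Finset.range ((Λ s).parts i),
    ((∑ a ∈ Finset.range (ghook (Λ s) (Λ s) i j).toNat, q ^ a) *
      ∏ t ∈ Finset.univ.erase s, (q ^ (ghook (Λ s) (Λ t) i j) * Q s * (Q t)⁻¹ - 1))

theorem schurProd_ne_zero_iff (hQ : ∀ s, Q s ≠ 0) (Λ : ι → Ptn) :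
    schurProd q Q Λ ≠ 0 ↔ ∀ s i j, j < (Λ s).parts i →
      ∑ a ∈ Finset.range (ghook (Λ s) (Λ s) i j).toNat, q ^ a ≠ 0 ∧
        ∀ t, t ≠ s → q ^ (ghook (Λ s) (Λ t) i j) * Q s ≠ Q t := by
  simp only [schurProd, Finset.prod_ne_zero_iff, Finset.mem_univ, true_imp_iff,
    Ptn.finprod_prod_range_ne_zero_iff, mul_ne_zero_iff, Finset.mem_erase, and_true, sub_ne_zero,
    ne_eq, mul_inv_eq_one₀ (hQ _)]

theorem ArikiGeneric.schurProd_ne_zero (h : ArikiGeneric n q Q) (hQ : ∀ s, Q s ≠ 0) {Λ : ι → Ptn}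
    (hΛ : ∑ s, (Λ s).size = n) : schurProd q Q Λ ≠ 0 := by
  refine (schurProd_ne_zero_iff hQ Λ).mpr fun s i j hj => ⟨?_, fun t hts => ?_⟩
  · have hpos := ghook_self_pos (Λ s) hj
    have hle := ghook_self_le_size (Λ s) hj
    have hsize : (Λ s).size ≤ n :=
      hΛ ▸ Finset.single_le_sum_of_canonicallyOrdered (f := fun r => (Λ r).size) (Finset.mem_univ s)
    exact h.geom_sum_ne_zero _ (by omega) (by omega)
  · have habs := abs_ghook_lt_size_add_size (Λ s) (Λ t) hj
    have hsize : (Λ s).size + (Λ t).size ≤ n := by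
      rw [← hΛ, ← Finset.sum_pair (f := fun r => (Λ r).size) hts.symm]
      exact Finset.sum_le_sum_of_subset (Finset.subset_univ _)
    exact h.zpow_mul_ne s t hts _ (by omega)

theorem ArikiGeneric.of_schurProd_rowAt_ne_zero [Nonempty ι] (hq : q ≠ 0) (hQ : ∀ s, Q s ≠ 0)
    (h : ∀ s, schurProd q Q (rowAt n s) ≠ 0) : ArikiGeneric n q Q := by
  have hnode (s : ι) (j : ℕ) (hj : j < n) :=
    (schurProd_ne_zero_iff hQ _).mp (h s) s 0 j (by simpa using hj)
  refine ⟨fun m hm hmn => ?_, fun s t hts k hk => ?_⟩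
  · obtain ⟨s⟩ := ‹Nonempty ι›
    have hsum := (hnode s (n - m) (by omega)).1
    rwa [rowAt_self, ghook_row_row (by omega),
      show ((n : ℤ) - (n - m : ℕ)).toNat = m by omega] at hsum
  · wlog hk0 : 0 ≤ k generalizing s t k
    · rw [ne_eq, ← zpow_neg_mul_eq_iff hq]
      exact this t s hts.symm (-k) (by rwa [abs_neg]) (by omega)
    rw [abs_of_nonneg hk0] at hk
    have hpair := (hnode s (n - 1 - k.toNat) (by omega)).2 t hts
    rwa [rowAt_self, rowAt_of_ne n hts, ghook_row_empty,
      show (n : ℤ) - 1 - (n - 1 - k.toNat : ℕ) = k by omega] at hpair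

end Criterion

/-- **Ariki's semisimplicity criterion.** A ring homomorphism
`θ : ℤ[q^{±1}, Q_0^{±1}, …, Q_{l-1}^{±1}] → K` into a field is determined by the nonzero
(i.e. invertible) images `qv = θ(q)` and `Qv s = θ(Q_s)`. Then `θ(P(q)) ≠ 0` iff
`θ(s_λ(q)) ≠ 0` for every `l`-partition `λ` of `n`, where
`P(q) = ∏_{i=1}^n (1+q+⋯+q^{i-1}) ∏_{s<t} ∏_{-n<k<n} (q^k Q_s - Q_t)` and
`s_λ(q) = (-1)^{n(l-1)} q^{-n(λ̄)} ∏_s ∏_{(i,j)∈[λ^s]} ([h^{λ^s,λ^s}_{i,j}]_q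
  ∏_{t≠s} (q^{h^{λ^s,λ^t}_{i,j}} Q_s Q_t⁻¹ - 1))`, with `[m]_q = q^{m-1}+⋯+q+1`
and `λ̄` the rearrangement, characterised by `λ̄'_k = Σ_s λ^{s'}_k`. -/
theorem stmt9 (l n : ℕ) (hl : 0 < l) (hn : 0 < n) {K : Type*} [Field K]
    (qv : K) (Qv : Fin l → K) (hq : qv ≠ 0) (hQ : ∀ s, Qv s ≠ 0) :
    ((∏ i ∈ Finset.range n, ∑ j ∈ Finset.range (i + 1), qv ^ j) *
        ∏ s : Fin l, ∏ t ∈ Finset.Ioi s, ∏ k ∈ Finset.Ioo (-(n : ℤ)) (n : ℤ),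
          (qv ^ k * Qv s - Qv t)) ≠ 0
    ↔ ∀ (Λ : Fin l → Ptn), (∑ s, (Λ s).size = n) →
        ∀ b : Ptn, (∀ k, b.conj k = ∑ s, (Λ s).conj k) →
          ((-1 : K) ^ (n * (l - 1)) * qv ^ (-(b.nn : ℤ)) *
            ∏ s, ∏ᶠ i, ∏ j ∈ Finset.range ((Λ s).parts i),
              ((∑ a ∈ Finset.range (ghook (Λ s) (Λ s) i j).toNat, qv ^ a) *
                ∏ t ∈ Finset.univ.erase s,
                  (qv ^ (ghook (Λ s) (Λ t) i j) * Qv s * (Qv t)⁻¹ - 1))) ≠ 0 := by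
  have hunit (b : Ptn) : (-1 : K) ^ (n * (l - 1)) * qv ^ (-(b.nn : ℤ)) ≠ 0 :=
    mul_ne_zero (pow_ne_zero _ (neg_ne_zero.mpr one_ne_zero)) (zpow_ne_zero _ hq)
  have : Nonempty (Fin l) := ⟨⟨0, hl⟩⟩
  rw [poincare_ne_zero_iff_arikiGeneric hq]
  constructor
  · intro h Λ hΛ b _
    exact mul_ne_zero (hunit b) (h.schurProd_ne_zero hQ hΛ)
  · intro h
    refine .of_schurProd_rowAt_ne_zero hq hQ fun s => right_ne_zero_of_mul <|
      h (rowAt n s) ?_ (.row n) fun k => (sum_rowAt (f := (Ptn.conj · k)) (by simp) n s).symm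
    rw [sum_rowAt Ptn.size_empty, Ptn.size_row]
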